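/- Suppose that g_n is non-decreasing, k_n/g_n is eventually non-decreasing, ∑_{n≥1} g_n^{-1} = ∞, and additionally n·g_n/k_n → 0 as n → ∞. If s > β and X is a weak solution of the dyadic model with X(0) ∈ H^s and X ∈ L^∞([0,T]; H^s), then X ∈ L^∞_loc((0,T]; H^{s'}) for every s' > 0, i.e. for every ε ∈ (0,T) and every s' > 0, sup_{t∈[ε,T]} ∑_{n≥1} 2^{2s'n} X_n(t)² < ∞. -/

import Mathlib

open scoped BigOperators ENNReal
open MeasureTheory Filter Set Topology

/-- `kₙ = 2^{βn}`. -/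
noncomputable def kk (β : ℝ) (n : ℕ) : ℝ := (2 : ℝ) ^ (β * n)

/-- A weak solution of the dyadic model: `X 0 ≡ 0`, `X n 0 = x n`, and the ODE holds
for every `n ≥ 1` and `t ≥ 0` (the derivative being taken within `[0,∞)`). -/
def IsDyadicSolution (β : ℝ) (φ g : ℕ → ℝ) (x : ℕ → ℝ) (X : ℕ → ℝ → ℝ) : Prop :=
  (∀ t : ℝ, X 0 t = 0) ∧
  (∀ n : ℕ, 1 ≤ n → X n 0 = x n) ∧
  (∀ n : ℕ, 1 ≤ n → ∀ t : ℝ, 0 ≤ t →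
    HasDerivWithinAt (X n)
      (φ (n - 1) * kk β (n - 1) * (X (n - 1) t) ^ 2
        - φ n * kk β n * X n t * X (n + 1) t
        - kk β n / g n * X n t) (Set.Ici 0) t)

/-- `x ∈ Hˢ`, i.e. `∑_{n≥1} 2^{2sn} xₙ² < ∞`. -/
def MemHs (s : ℝ) (x : ℕ → ℝ) : Prop :=
  Summable (fun n : ℕ => (2 : ℝ) ^ (2 * s * ((n : ℝ) + 1)) * (x (n + 1)) ^ 2)

/-- `X ∈ L^∞(I; Hˢ)`. -/
def MemLinftyHs (s : ℝ) (X : ℕ → ℝ → ℝ) (I : Set ℝ) : Prop :=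
  ∃ M : ℝ, ∀ t ∈ I,
    Summable (fun n : ℕ => (2 : ℝ) ^ (2 * s * ((n : ℝ) + 1)) * (X (n + 1) t) ^ 2) ∧
    (∑' n : ℕ, (2 : ℝ) ^ (2 * s * ((n : ℝ) + 1)) * (X (n + 1) t) ^ 2) ≤ M

/-!
The linear damping `kₙ / gₙ` of mode `n` outgrows every multiple of `n`. Suppose
`2^{σn} |Xₙ|` is bounded uniformly in `n` for some `σ > β`. Then `kₙ |Xₙ₊₁|` is bounded, so the
outgoing transfer perturbs the damping by `O(1)` only and the mode solves `f' = h - c f` with `c`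
superlinear in `n` and `h = φₙ₋₁ kₙ₋₁ Xₙ₋₁² = O(2^{-(2σ-β)n})`. After any positive time the
contribution of the initial value decays in `n` faster than any exponential, and what remains is
`h / c`: the decay exponent has improved from `σ` to `2σ - β`, i.e. the excess `σ - β` has doubled.
Iterating while giving up a bit of time at each stage reaches every exponent.
-/

/-! ### Damped scalar equations -/

theorem sq_le_of_hasDerivWithinAt_sub_mul {f h c : ℝ → ℝ} {a b μ H : ℝ} (hμ : 0 < μ)
    (hfc : ContinuousOn f (Icc a b))
    (hf : ∀ t ∈ Ico a b, HasDerivWithinAt f (h t - c t * f t) (Ici t) t)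
    (hh : ∀ t ∈ Ico a b, |h t| ≤ H) (hc : ∀ t ∈ Ico a b, μ ≤ c t) :
    ∀ t ∈ Icc a b, f t ^ 2 ≤ f a ^ 2 * Real.exp (-(μ * (t - a))) + (H / μ) ^ 2 := by
  intro t ht
  have deriv_sq : ∀ r ∈ Ico a b,
      HasDerivWithinAt (fun r ↦ f r ^ 2) (2 * f r * (h r - c r * f r)) (Ici r) r :=
    fun r hr ↦ by simpa using (hf r hr).fun_pow 2
  have deriv_sq_le : ∀ r ∈ Ico a b,
      2 * f r * (h r - c r * f r) ≤ -μ * f r ^ 2 + H ^ 2 / μ := by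
    intro r hr
    have young : 2 * f r * h r ≤ μ * f r ^ 2 + h r ^ 2 / μ := by
      have : 0 ≤ (μ * f r - h r) ^ 2 / μ := by positivity
      have : (μ * f r - h r) ^ 2 / μ = μ * f r ^ 2 - 2 * f r * h r + h r ^ 2 / μ := by
        field_simp
        ring
      linarith
    have forcing : h r ^ 2 / μ ≤ H ^ 2 / μ := by
      rw [← sq_abs (h r)]
      gcongr
      exact hh r hr
    have damping : μ * f r ^ 2 ≤ c r * f r ^ 2 := by
      gcongr
      exact hc r hr
    linarith
  have gronwall := le_gronwallBound_of_liminf_deriv_right_le (hfc.pow 2)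
    (fun r hr _ ↦ (deriv_sq r hr).liminf_right_slope_le) le_rfl deriv_sq_le t ht
  rw [gronwallBound_of_K_ne_0 (neg_ne_zero.2 hμ.ne')] at gronwall
  calc f t ^ 2
      ≤ f a ^ 2 * Real.exp (-μ * (t - a))
          + H ^ 2 / μ / -μ * (Real.exp (-μ * (t - a)) - 1) := gronwall
    _ = f a ^ 2 * Real.exp (-(μ * (t - a))) + (H / μ) ^ 2
          - (H / μ) ^ 2 * Real.exp (-(μ * (t - a))) := by
        rw [neg_mul]
        field_simp
        ring
    _ ≤ f a ^ 2 * Real.exp (-(μ * (t - a))) + (H / μ) ^ 2 :=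
        sub_le_self _ (by positivity)

theorem abs_le_of_hasDerivWithinAt_sub_mul {f h c : ℝ → ℝ} {a b μ H : ℝ} (hμ : 0 < μ) (hH : 0 ≤ H)
    (hfc : ContinuousOn f (Icc a b))
    (hf : ∀ t ∈ Ico a b, HasDerivWithinAt f (h t - c t * f t) (Ici t) t)
    (hh : ∀ t ∈ Ico a b, |h t| ≤ H) (hc : ∀ t ∈ Ico a b, μ ≤ c t) :
    ∀ t ∈ Icc a b, |f t| ≤ |f a| * Real.exp (-(μ / 2 * (t - a))) + H / μ := by
  intro t ht
  set p := |f a| * Real.exp (-(μ / 2 * (t - a)))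
  have hp : 0 ≤ p := by positivity
  have hq : 0 ≤ H / μ := by positivity
  refine abs_le_of_sq_le_sq ?_ (add_nonneg hp hq)
  calc f t ^ 2 ≤ f a ^ 2 * Real.exp (-(μ * (t - a))) + (H / μ) ^ 2 :=
        sq_le_of_hasDerivWithinAt_sub_mul hμ hfc hf hh hc t ht
    _ = p ^ 2 + (H / μ) ^ 2 := by
        rw [mul_pow, sq_abs, ← Real.exp_nat_mul]
        ring_nf
    _ ≤ (p + H / μ) ^ 2 := by nlinarith

/-! ### Weights -/

theorem kk_pos (σ : ℝ) (n : ℕ) : 0 < kk σ n := Real.rpow_pos_of_pos two_pos _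

theorem kk_add (σ τ : ℝ) (n : ℕ) : kk (σ + τ) n = kk σ n * kk τ n := by
  rw [kk, add_mul, Real.rpow_add two_pos, kk, kk]

theorem kk_succ (σ : ℝ) (n : ℕ) : kk σ (n + 1) = 2 ^ σ * kk σ n := by
  rw [kk, Nat.cast_add_one, mul_add_one, add_comm, Real.rpow_add two_pos, kk]

theorem kk_mono_left {σ τ : ℝ} (h : σ ≤ τ) (n : ℕ) : kk σ n ≤ kk τ n :=
  Real.rpow_le_rpow_of_exponent_le one_le_two (by gcongr)

theorem kk_eq_exp (σ : ℝ) (n : ℕ) : kk σ n = Real.exp (Real.log 2 * (σ * n)) :=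
  Real.rpow_def_of_pos two_pos _

theorem kk_eq_pow (σ : ℝ) (n : ℕ) : kk σ n = (2 ^ σ) ^ n :=
  Real.rpow_mul_natCast two_pos.le σ n

theorem rpow_two_mul_sq_eq (s y : ℝ) (n : ℕ) :
    (2 : ℝ) ^ (2 * s * ((n : ℝ) + 1)) * y ^ 2 = (kk s (n + 1) * |y|) ^ 2 := by
  rw [mul_pow, sq_abs, kk, ← Real.rpow_mul_natCast two_pos.le]
  push_cast
  ring_nf

theorem kk_mul_exp_le_one {γ r : ℝ} {n : ℕ} (h : Real.log 2 * (γ * n) ≤ r) :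
    kk γ n * Real.exp (-r) ≤ 1 := by
  rw [kk_eq_exp, ← Real.exp_add]
  exact Real.exp_le_one_iff.2 (by linarith)

theorem abs_kk_mul_succ_le {β D y : ℝ} {n : ℕ} (hy : kk β (n + 1) * |y| ≤ D) :
    |kk β n * y| ≤ 2 ^ (-β) * D := by
  calc |kk β n * y| = 2 ^ (-β) * (kk β (n + 1) * |y|) := by
        rw [abs_mul, abs_of_pos (kk_pos β n), kk_succ, ← mul_assoc, ← mul_assoc,
          ← Real.rpow_add two_pos, neg_add_cancel, Real.rpow_zero, one_mul]
    _ ≤ 2 ^ (-β) * D := by gcongr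

theorem kk_mul_sq_le {β σ C y : ℝ} {n : ℕ} (hy : kk σ n * |y| ≤ C) :
    kk β n * y ^ 2 ≤ C ^ 2 / kk (2 * σ - β) n := by
  have weight : kk β n * kk (2 * σ - β) n = kk σ n ^ 2 := by
    rw [← kk_add, sq, ← kk_add]
    ring_nf
  have := (kk_pos σ n).le
  rw [le_div_iff₀ (kk_pos _ n)]
  calc kk β n * y ^ 2 * kk (2 * σ - β) n = (kk σ n * |y|) ^ 2 := by
        rw [mul_pow, sq_abs, ← weight]
        ring
    _ ≤ C ^ 2 := by gcongr

/-! ### Uniform decay -/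

/-- `Xₙ = O(2^{-σn})` uniformly on `I`: the weighted `ℓ^∞` counterpart of `MemLinftyHs σ X I`, in
which the bootstrap runs since it is a statement about single modes. The weight `2^{σn}` is
written `kk σ n`. -/
def HasDecay (σ : ℝ) (X : ℕ → ℝ → ℝ) (I : Set ℝ) : Prop :=
  ∃ C : ℝ, ∀ t ∈ I, ∀ n : ℕ, kk σ n * |X n t| ≤ C

section HasDecay

variable {σ τ : ℝ} {X : ℕ → ℝ → ℝ} {I : Set ℝ}

theorem HasDecay.mono (hX : HasDecay τ X I) (h : σ ≤ τ) : HasDecay σ X I := by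
  obtain ⟨C, hC⟩ := hX
  refine ⟨C, fun t ht n ↦ le_trans ?_ (hC t ht n)⟩
  gcongr
  exact kk_mono_left h n

theorem HasDecay.of_eventually (hX : HasDecay σ X I) {C : ℝ}
    (hC : ∀ᶠ n in atTop, ∀ t ∈ I, kk τ n * |X n t| ≤ C) : HasDecay τ X I := by
  obtain ⟨D, hD⟩ := hX
  obtain ⟨N, hN⟩ := eventually_atTop.1 hC
  obtain ⟨B, hB⟩ := ((Finset.range N).image fun n ↦ kk (τ - σ) n * D).bddAbove
  refine ⟨max B C, fun t ht n ↦ ?_⟩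
  rcases lt_or_ge n N with hn | hn
  · calc kk τ n * |X n t| = kk (τ - σ) n * (kk σ n * |X n t|) := by
          rw [← mul_assoc, ← kk_add, sub_add_cancel]
      _ ≤ kk (τ - σ) n * D := mul_le_mul_of_nonneg_left (hD t ht n) (kk_pos _ n).le
      _ ≤ B := hB (Finset.mem_coe.2 (Finset.mem_image_of_mem _ (Finset.mem_range.2 hn)))
      _ ≤ max B C := le_max_left B C
  · exact (hN n hn t ht).trans (le_max_right B C)

theorem MemLinftyHs.hasDecay (hX : MemLinftyHs σ X I) (hX₀ : ∀ t ∈ I, X 0 t = 0) :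
    HasDecay σ X I := by
  obtain ⟨M, hM⟩ := hX
  refine ⟨√M, fun t ht n ↦ ?_⟩
  obtain ⟨hsum, hle⟩ := hM t ht
  cases n with
  | zero => simp [hX₀ t ht]
  | succ n =>
    refine Real.le_sqrt_of_sq_le ?_
    rw [← rpow_two_mul_sq_eq]
    exact (hsum.le_tsum n fun _ _ ↦ by positivity).trans hle

theorem HasDecay.memLinftyHs (hX : HasDecay τ X I) (h : σ < τ) : MemLinftyHs σ X I := by
  obtain ⟨C, hC⟩ := hX
  have ratio_lt_one : ((2 : ℝ) ^ (2 * (σ - τ))) < 1 :=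
    Real.rpow_lt_one_of_one_lt_of_neg one_lt_two (by linarith)
  have geometric : Summable fun n : ℕ ↦ kk (2 * (σ - τ)) (n + 1) * C ^ 2 := by
    simp only [kk_eq_pow]
    exact ((summable_nat_add_iff 1).2
      (summable_geometric_of_lt_one (by positivity) ratio_lt_one)).mul_right _
  have term_le : ∀ t ∈ I, ∀ n : ℕ,
      (2 : ℝ) ^ (2 * σ * ((n : ℝ) + 1)) * X (n + 1) t ^ 2
        ≤ kk (2 * (σ - τ)) (n + 1) * C ^ 2 := by
    intro t ht n
    have weight : kk (2 * (σ - τ)) (n + 1) * kk τ (n + 1) ^ 2 = kk σ (n + 1) ^ 2 := by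
      simp only [sq, ← kk_add]
      ring_nf
    calc (2 : ℝ) ^ (2 * σ * ((n : ℝ) + 1)) * X (n + 1) t ^ 2
        = kk (2 * (σ - τ)) (n + 1) * (kk τ (n + 1) * |X (n + 1) t|) ^ 2 := by
          rw [rpow_two_mul_sq_eq, mul_pow, mul_pow, ← mul_assoc, weight]
      _ ≤ kk (2 * (σ - τ)) (n + 1) * C ^ 2 := by
          have := (kk_pos τ (n + 1)).le
          have := (kk_pos (2 * (σ - τ)) (n + 1)).le
          gcongr
          exact hC t ht (n + 1)
  refine ⟨∑' n : ℕ, kk (2 * (σ - τ)) (n + 1) * C ^ 2, fun t ht ↦ ?_⟩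
  have hsum := geometric.of_nonneg_of_le (fun n ↦ by positivity) (term_le t ht)
  exact ⟨hsum, hsum.tsum_le_tsum (term_le t ht) geometric⟩

end HasDecay

/-! ### Smoothing -/

section Smoothing

variable {β σ T Φ : ℝ} {φ g x : ℕ → ℝ} {X : ℕ → ℝ → ℝ}

theorem tendsto_kk_div_div_atTop (hgpos : ∀ n : ℕ, 1 ≤ n → 0 < g n)
    (hng : Tendsto (fun n : ℕ ↦ (n : ℝ) * g n / kk β n) atTop (𝓝 0)) :
    Tendsto (fun n : ℕ ↦ kk β n / g n / n) atTop atTop := by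
  have pos : ∀ᶠ n : ℕ in atTop, (n : ℝ) * g n / kk β n ∈ Ioi 0 := by
    filter_upwards [eventually_ge_atTop 1] with n hn
    exact div_pos (mul_pos (Nat.cast_pos.2 hn) (hgpos n hn)) (kk_pos β n)
  refine (tendsto_nhdsWithin_iff.2 ⟨hng, pos⟩).inv_tendsto_nhdsGT_zero.congr fun n ↦ ?_
  rw [Pi.inv_apply, inv_div, div_div, mul_comm]

theorem eventually_mul_add_le_of_tendsto_div {u : ℕ → ℝ}
    (hu : Tendsto (fun n : ℕ ↦ u n / n) atTop atTop) (A B : ℝ) :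
    ∀ᶠ n : ℕ in atTop, A * n + B ≤ u n := by
  filter_upwards [hu.eventually_ge_atTop (A + |B|), eventually_ge_atTop 1] with n hn hn1
  have one_le : (1 : ℝ) ≤ n := Nat.one_le_cast.2 hn1
  rw [le_div_iff₀ (by positivity)] at hn
  nlinarith [le_abs_self B, abs_nonneg B]

theorem IsDyadicSolution.hasDerivWithinAt_succ (hsol : IsDyadicSolution β φ g x X) (n : ℕ)
    {t : ℝ} (ht : 0 ≤ t) :
    HasDerivWithinAt (X (n + 1))
      (φ n * (kk β n * X n t ^ 2)
        - (kk β (n + 1) / g (n + 1) + φ (n + 1) * (kk β (n + 1) * X (n + 2) t)) * X (n + 1) t)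
      (Ici 0) t := by
  refine (hsol.2.2 (n + 1) n.succ_pos t ht).congr_deriv ?_
  rw [Nat.add_sub_cancel]
  ring

theorem IsDyadicSolution.abs_succ_le (hsol : IsDyadicSolution β φ g x X) {a μ H : ℝ} {n : ℕ}
    (ha : 0 ≤ a) (hμ : 0 < μ) (hH : 0 ≤ H)
    (hforce : ∀ t ∈ Icc a T, |φ n * (kk β n * X n t ^ 2)| ≤ H)
    (hdamp : ∀ t ∈ Icc a T,
      μ ≤ kk β (n + 1) / g (n + 1) + φ (n + 1) * (kk β (n + 1) * X (n + 2) t)) :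
    ∀ t ∈ Icc a T, |X (n + 1) t| ≤ |X (n + 1) a| * Real.exp (-(μ / 2 * (t - a))) + H / μ :=
  abs_le_of_hasDerivWithinAt_sub_mul hμ hH
    (fun _ ht ↦ (hsol.hasDerivWithinAt_succ n (ha.trans ht.1)).continuousWithinAt.mono
      fun _ hr ↦ ha.trans hr.1)
    (fun _ ht ↦ (hsol.hasDerivWithinAt_succ n (ha.trans ht.1)).mono
      (Ici_subset_Ici.2 (ha.trans ht.1)))
    (fun t ht ↦ hforce t (Ico_subset_Icc_self ht)) (fun t ht ↦ hdamp t (Ico_subset_Icc_self ht))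

theorem abs_forcing_le {p C y : ℝ} {n : ℕ} (hp : |p| ≤ Φ) (hy : kk σ n * |y| ≤ C) :
    |p * (kk β n * y ^ 2)| ≤ Φ * (C ^ 2 / kk (2 * σ - β) n) := by
  have hΦ : 0 ≤ Φ := (abs_nonneg p).trans hp
  have hky : 0 ≤ kk β n * y ^ 2 := mul_nonneg (kk_pos β n).le (sq_nonneg y)
  rw [abs_mul, abs_of_nonneg hky]
  exact mul_le_mul hp (kk_mul_sq_le hy) hky hΦ

theorem le_add_transfer {p c D μ y : ℝ} {n : ℕ} (hp : |p| ≤ Φ) (hy : kk β (n + 1) * |y| ≤ D)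
    (hc : μ + Φ * (2 ^ (-β) * D) ≤ c) : μ ≤ c + p * (kk β n * y) := by
  have hΦ : 0 ≤ Φ := (abs_nonneg p).trans hp
  have transfer : |p * (kk β n * y)| ≤ Φ * (2 ^ (-β) * D) := by
    rw [abs_mul]
    gcongr
    exact abs_kk_mul_succ_le hy
  linarith [neg_le_of_abs_le transfer]

theorem IsDyadicSolution.kk_mul_abs_succ_le (hsol : IsDyadicSolution β φ g x X)
    (hφ : ∀ n : ℕ, |φ n| ≤ Φ) {a C D μ t : ℝ} {n : ℕ} (ha : 0 ≤ a) (hμ : 1 ≤ μ)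
    (hσ : ∀ t ∈ Icc a T, ∀ n : ℕ, kk σ n * |X n t| ≤ C)
    (hβ : ∀ t ∈ Icc a T, ∀ n : ℕ, kk β n * |X n t| ≤ D)
    (hdamp : μ + Φ * (2 ^ (-β) * D) ≤ kk β (n + 1) / g (n + 1))
    (ht : t ∈ Icc a T) (htμ : Real.log 2 * ((σ - β) * (n + 1 : ℕ)) ≤ μ / 2 * (t - a)) :
    kk (2 * σ - β) (n + 1) * |X (n + 1) t| ≤ C + 2 ^ (2 * σ - β) * (Φ * C ^ 2) := by
  have hΦ : 0 ≤ Φ := (abs_nonneg _).trans (hφ 0)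
  have hμ₀ : 0 < μ := one_pos.trans_le hμ
  have := kk_pos (2 * σ - β) n
  have := kk_pos (2 * σ - β) (n + 1)
  have initial : kk (2 * σ - β) (n + 1) * (|X (n + 1) a| * Real.exp (-(μ / 2 * (t - a)))) ≤ C := by
    calc _ = kk σ (n + 1) * |X (n + 1) a|
            * (kk (σ - β) (n + 1) * Real.exp (-(μ / 2 * (t - a)))) := by
          rw [show 2 * σ - β = σ + (σ - β) by ring, kk_add]
          ring
      _ ≤ kk σ (n + 1) * |X (n + 1) a| :=
          mul_le_of_le_one_right (mul_nonneg (kk_pos σ _).le (abs_nonneg _))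
            (kk_mul_exp_le_one htμ)
      _ ≤ C := hσ a ⟨le_rfl, ht.1.trans ht.2⟩ (n + 1)
  calc kk (2 * σ - β) (n + 1) * |X (n + 1) t|
      ≤ kk (2 * σ - β) (n + 1) * (|X (n + 1) a| * Real.exp (-(μ / 2 * (t - a)))
          + Φ * (C ^ 2 / kk (2 * σ - β) n) / μ) := by
        gcongr
        exact hsol.abs_succ_le ha hμ₀ (by positivity)
          (fun r hr ↦ abs_forcing_le (hφ n) (hσ r hr n))
          (fun r hr ↦ le_add_transfer (hφ (n + 1)) (hβ r hr (n + 2)) hdamp) t ht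
    _ ≤ C + kk (2 * σ - β) (n + 1) * (Φ * (C ^ 2 / kk (2 * σ - β) n)) := by
        rw [mul_add]
        gcongr
        exact div_le_self (by positivity) hμ
    _ = C + 2 ^ (2 * σ - β) * (Φ * C ^ 2) := by
        rw [kk_succ]
        field_simp

theorem IsDyadicSolution.hasDecay_two_mul_sub (hsol : IsDyadicSolution β φ g x X)
    (hφ : ∀ n : ℕ, |φ n| ≤ Φ) (hdiss : Tendsto (fun n : ℕ ↦ kk β n / g n / n) atTop atTop)
    (hσ : β ≤ σ) {a b : ℝ} (ha : 0 ≤ a) (hab : a < b) (hX : HasDecay σ X (Icc a T)) :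
    HasDecay (2 * σ - β) X (Icc b T) := by
  have hX' : HasDecay σ X (Icc b T) :=
    hX.imp fun _ hC t ht ↦ hC t ⟨hab.le.trans ht.1, ht.2⟩
  obtain ⟨D, hD⟩ := hX.mono hσ
  obtain ⟨C, hC⟩ := hX
  -- `A` makes the damping over the time `b - a` beat the gained weight `kk (σ - β) n`.
  set A := 2 * (Real.log 2 * (σ - β)) / (b - a) with hA
  have hba : 0 < b - a := sub_pos.2 hab
  have : 0 ≤ A := by
    have := sub_nonneg.2 hσ
    positivity
  refine hX'.of_eventually (C := C + 2 ^ (2 * σ - β) * (Φ * C ^ 2)) ?_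
  filter_upwards [eventually_mul_add_le_of_tendsto_div hdiss A (1 + Φ * (2 ^ (-β) * D)),
    eventually_ge_atTop 1] with m hm hm₁ t ht
  obtain ⟨n, rfl⟩ := Nat.exists_eq_add_of_le' hm₁
  have hμ : 0 ≤ A * (n + 1 : ℕ) := by positivity
  refine hsol.kk_mul_abs_succ_le hφ (μ := A * (n + 1 : ℕ) + 1) ha (by linarith) hC hD
    (by linarith) ⟨hab.le.trans ht.1, ht.2⟩ ?_
  calc Real.log 2 * ((σ - β) * (n + 1 : ℕ)) = A * (n + 1 : ℕ) / 2 * (b - a) := by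
        rw [hA]
        field_simp
    _ ≤ (A * (n + 1 : ℕ) + 1) / 2 * (t - a) := by
        gcongr
        exacts [le_add_of_nonneg_right zero_le_one, ht.1]

theorem IsDyadicSolution.hasDecay_add_two_pow_mul (hsol : IsDyadicSolution β φ g x X)
    (hφ : ∀ n : ℕ, |φ n| ≤ Φ) (hdiss : Tendsto (fun n : ℕ ↦ kk β n / g n / n) atTop atTop)
    {δ : ℝ} (hδ : 0 ≤ δ) (hX : ∀ ε > 0, HasDecay (β + δ) X (Icc ε T)) (j : ℕ) :
    ∀ ε > 0, HasDecay (β + 2 ^ j * δ) X (Icc ε T) := by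
  induction j with
  | zero => simpa using hX
  | succ j ih =>
    intro ε hε
    have step := hsol.hasDecay_two_mul_sub hφ hdiss (le_add_of_nonneg_right (by positivity))
      (half_pos hε).le (half_lt_self hε) (ih (ε / 2) (half_pos hε))
    rwa [show 2 * (β + 2 ^ j * δ) - β = β + 2 ^ (j + 1) * δ by ring] at step

theorem dyadic_smoothing_general (hφ : ∃ Φ : ℝ, ∀ n : ℕ, |φ n| ≤ Φ)
    (hgpos : ∀ n : ℕ, 1 ≤ n → 0 < g n)
    (hng : Tendsto (fun n : ℕ ↦ (n : ℝ) * g n / kk β n) atTop (𝓝 0))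
    {s : ℝ} (hs : β < s) (hsol : IsDyadicSolution β φ g x X)
    (hX : ∀ ε > 0, MemLinftyHs s X (Icc ε T)) :
    ∀ ε > 0, ∀ s' : ℝ, MemLinftyHs s' X (Icc ε T) := by
  intro ε hε s'
  obtain ⟨Φ, hΦ⟩ := hφ
  have hδ : 0 < s - β := sub_pos.2 hs
  have hdecay : ∀ ε > 0, HasDecay (β + (s - β)) X (Icc ε T) := fun η hη ↦ by
    simpa using (hX η hη).hasDecay fun t _ ↦ hsol.1 t
  obtain ⟨j, hj⟩ := pow_unbounded_of_one_lt ((s' - β) / (s - β)) one_lt_two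
  rw [div_lt_iff₀ hδ, sub_lt_iff_lt_add'] at hj
  exact (hsol.hasDecay_add_two_pow_mul hΦ (tendsto_kk_div_div_atTop hgpos hng) hδ.le hdecay j
    ε hε).memLinftyHs hj

end Smoothing

/-- Smoothing by dissipation: if `n·gₙ/kₙ → 0`, `s > β`, and `X` is a solution bounded
in `Hˢ` on `[0,T]`, then `X ∈ L^∞_loc((0,T]; H^{s'})` for every `s' > 0`. -/
theorem dyadic_smoothing
    (β : ℝ) (hβ : 0 < β) (φ g : ℕ → ℝ)
    (hφ : ∃ Φ : ℝ, ∀ n : ℕ, |φ n| ≤ Φ)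
    (hgpos : ∀ n : ℕ, 1 ≤ n → 0 < g n)
    (hgmono : ∀ n m : ℕ, 1 ≤ n → n ≤ m → g n ≤ g m)
    (hkg : ∃ N : ℕ, ∀ n m : ℕ, N ≤ n → n ≤ m → kk β n / g n ≤ kk β m / g m)
    (hgdiv : ¬ Summable fun n : ℕ => (g (n + 1))⁻¹)
    (hng : Filter.Tendsto (fun n : ℕ => (n : ℝ) * g n / kk β n) Filter.atTop (nhds 0))
    (T : ℝ) (hT : 0 < T) (s : ℝ) (hs : β < s)
    (x : ℕ → ℝ) (X : ℕ → ℝ → ℝ) (hsol : IsDyadicSolution β φ g x X)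
    (hx : MemHs s x) (hX : MemLinftyHs s X (Set.Icc 0 T)) :
    ∀ ε : ℝ, 0 < ε → ε < T → ∀ s' : ℝ, 0 < s' →
      MemLinftyHs s' X (Set.Icc ε T) := by
  obtain ⟨M, hM⟩ := hX
  intro ε hε _ s' _
  exact dyadic_smoothing_general hφ hgpos hng hs hsol
    (fun δ hδ ↦ ⟨M, fun t ht ↦ hM t ⟨hδ.le.trans ht.1, ht.2⟩⟩) ε hε s'
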